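/- Fix k ≥ 1 and Δ > Δ_k, and for each n ≥ k let m = ⌈Δ n^k⌉. Define the test ψ_L on m-tuples V = (V_1,…,V_m) of k-flats of F_2^n by ψ_L(V) = 1 iff there exists an F_2-linear functional φ : U → F_2 with φ(const 1) = 1 and φ(1_{V_j}) = 0 for all j. Then max( P_unif(ψ_L = 1), P_planted(ψ_L = 0) ) → 0 as n → ∞; in fact P_planted(ψ_L = 0) = 0 for every n. -/

import Mathlib

/-!
A point `x` avoided by every flat gives the solution `f ↦ f x` of the linear system, so `ψ_L` never
rejects a planted sample.

For a uniform sample, fix a functional `φ` on `U` with `φ 1 = 1`. The cosets of the direction of a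
flat partition `F_2^n`, so their indicators sum to `1` and `φ` is nonzero on at least one of them.
As there are at most `2^k` cosets of each direction, `φ` vanishes on at most a fraction `1 - 2^{-k}`
of all flats. Since `dim U ≤ (n + 1)^k`, a union bound over `φ` gives
`P_unif(ψ_L = 1) ≤ 2^{(n + 1)^k} (1 - 2^{-k})^m`, which tends to `0` for `m = ⌈Δ n^k⌉` and
`Δ > Δ_k`.
-/

open scoped BigOperators Classical
open Filter Topology

abbrev F2n (n : ℕ) := Fin n → ZMod 2

def IsFlat (n k : ℕ) (W : Set (F2n n)) : Prop :=
  ∃ A : AffineSubspace (ZMod 2) (F2n n),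
    (A : Set (F2n n)) = W ∧ W.Nonempty ∧ Module.finrank (ZMod 2) A.direction = n - k

def Flat (n k : ℕ) : Type := {W : Set (F2n n) // IsFlat n k W}

noncomputable instance (n k : ℕ) : Fintype (Flat n k) := by
  unfold Flat; exact Fintype.ofFinite _

noncomputable def q0 (n k : ℕ) : Flat n k → ℝ :=
  fun _ => (Fintype.card (Flat n k) : ℝ)⁻¹

noncomputable def qx (n k : ℕ) (x : F2n n) : Flat n k → ℝ :=
  fun W => if x ∈ W.1 then 0 else (Nat.card {W : Flat n k // x ∉ W.1} : ℝ)⁻¹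

noncomputable def prob {α : Type*} [Fintype α] (p : α → ℝ) (E : Set α) : ℝ :=
  ∑ a, if a ∈ E then p a else 0

noncomputable def expect {α : Type*} [Fintype α] (p : α → ℝ) (f : α → ℝ) : ℝ :=
  ∑ a, p a * f a

noncomputable def Punif (n k m : ℕ) : (Fin m → Flat n k) → ℝ :=
  fun V => ∏ j, q0 n k (V j)

noncomputable def Pplanted (n k m : ℕ) : (Fin m → Flat n k) → ℝ :=
  fun V => ((2:ℝ)^n)⁻¹ * ∑ x : F2n n, ∏ j, qx n k x (V j)

noncomputable def Z (n k m : ℕ) (V : Fin m → Flat n k) : ℕ :=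
  Nat.card {x : F2n n // ∀ j, x ∉ (V j).1}

noncomputable def satCount (n k m : ℕ) (V : Fin m → Flat n k) (x : F2n n) : ℕ :=
  Nat.card {j : Fin m // x ∉ (V j).1}

noncomputable def maxSat (n k m : ℕ) (V : Fin m → Flat n k) : ℕ :=
  Finset.univ.sup (fun x : F2n n => satCount n k m V x)

noncomputable def qxpi (n k : ℕ) (x : F2n n) (π : ℝ) : Flat n k → ℝ :=
  fun W => (1 - π) * q0 n k W + π * qx n k x W

noncomputable def Pplantedpi (n k m : ℕ) (π : ℝ) : (Fin m → Flat n k) → ℝ :=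
  fun V => ((2:ℝ)^n)⁻¹ * ∑ x : F2n n, ∏ j, qxpi n k x π (V j)

noncomputable def DeltaK (k : ℕ) : ℝ :=
  Real.log (1/2) / Real.log (1 - ((2:ℝ)^k)⁻¹)

def monomialSpan (n k : ℕ) : Submodule (ZMod 2) (F2n n → ZMod 2) :=
  Submodule.span (ZMod 2)
    {f : F2n n → ZMod 2 | ∃ S : Finset (Fin n), S.card ≤ k ∧ f = fun x => ∏ s ∈ S, x s}

/-- The event that the relaxed linear system `L_V` has a solution, i.e. that there is a linear
functional on the span of monomials of degree at most `k` sending the constant function `1` to `1`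
and the indicator of each flat `V j` to `0`. -/
def psiL (n k m : ℕ) (hconst : (fun _ => (1 : ZMod 2)) ∈ monomialSpan n k)
    (hind : ∀ W : Flat n k, Set.indicator W.1 1 ∈ monomialSpan n k)
    (V : Fin m → Flat n k) : Prop :=
  ∃ φ : (monomialSpan n k) →ₗ[ZMod 2] ZMod 2,
    φ ⟨fun _ => 1, hconst⟩ = 1 ∧ ∀ j : Fin m, φ ⟨Set.indicator (V j).1 1, hind (V j)⟩ = 0

section Prob

variable {α ι κ : Type*} [Fintype α]

lemma prob_nonneg {p : α → ℝ} {A : Set α} (hp : ∀ a, 0 ≤ p a) : 0 ≤ prob p A :=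
  Finset.sum_nonneg fun a _ => by split_ifs <;> simp [hp a]

lemma prob_eq_zero {p : α → ℝ} {A : Set α} (h : ∀ a ∈ A, p a = 0) : prob p A = 0 :=
  Finset.sum_eq_zero fun a _ => ite_eq_right_iff.2 (h a)

lemma prob_biUnion_le {p : α → ℝ} (hp : ∀ a, 0 ≤ p a) (s : Finset κ) (A : κ → Set α) :
    prob p (⋃ i ∈ s, A i) ≤ ∑ i ∈ s, prob p (A i) := by
  simp only [prob]
  rw [Finset.sum_comm]
  refine Finset.sum_le_sum fun a _ => ?_
  have hterm : ∀ i ∈ s, 0 ≤ if a ∈ A i then p a else 0 := fun i _ => by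
    split_ifs <;> simp [hp a]
  split_ifs with ha
  · obtain ⟨i, hi, hai⟩ := Set.mem_iUnion₂.1 ha
    simpa only [if_pos hai] using Finset.single_le_sum hterm hi
  · exact Finset.sum_nonneg hterm

lemma prob_prod_forall_mem [Fintype ι] [DecidableEq ι] (p : α → ℝ) (A : Set α) :
    prob (fun v : ι → α => ∏ i, p (v i)) {v | ∀ i, v i ∈ A} = prob p A ^ Fintype.card ι := by
  simp only [prob, Set.mem_ofPred_eq, ← Finset.card_univ, ← Finset.prod_const,
    Finset.prod_univ_sum, Fintype.piFinset_univ, Finset.prod_ite_zero, Finset.mem_univ,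
    forall_const]

lemma prob_prod_exists_forall_mem_le [Fintype ι] [DecidableEq ι] {p : α → ℝ}
    (hp : ∀ a, 0 ≤ p a) (s : Finset κ) (A : κ → Set α) :
    prob (fun v : ι → α => ∏ i, p (v i)) {v | ∃ c ∈ s, ∀ i, v i ∈ A c} ≤
      ∑ c ∈ s, prob p (A c) ^ Fintype.card ι := by
  have hunion : {v : ι → α | ∃ c ∈ s, ∀ i, v i ∈ A c} = ⋃ c ∈ s, {v | ∀ i, v i ∈ A c} := by
    ext v
    simp
  rw [hunion]
  refine (prob_biUnion_le (fun v => Finset.prod_nonneg fun i _ => hp (v i)) s _).trans_eq ?_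
  exact Finset.sum_congr rfl fun c _ => prob_prod_forall_mem p (A c)

end Prob

lemma sum_indicator_preimage_singleton {X Y R : Type*} [Fintype Y] [AddCommMonoidWithOne R]
    (f : X → Y) : ∑ y, (f ⁻¹' {y}).indicator (1 : X → R) = 1 := by
  ext x
  simp [Set.indicator_apply]

lemma coe_mk'_eq_preimage_mkQ {R E : Type*} [Ring R] [AddCommGroup E] [Module R E]
    (D : Submodule R E) (v : E) :
    (AffineSubspace.mk' v D : Set E) = D.mkQ ⁻¹' {D.mkQ v} := by
  ext x
  simp [AffineSubspace.mem_mk', Submodule.Quotient.eq]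

namespace Flat

variable {n k : ℕ}

/-- The direction of a flat, i.e. the linear subspace of which it is a translate. -/
def direction (W : Flat n k) : Submodule (ZMod 2) (F2n n) :=
  vectorSpan (ZMod 2) W.1

lemma finrank_direction (W : Flat n k) : Module.finrank (ZMod 2) W.direction = n - k := by
  obtain ⟨_, A, rfl, _, hA⟩ := W
  exact hA

section Coset

variable (D : Submodule (ZMod 2) (F2n n)) (hD : Module.finrank (ZMod 2) D = n - k)

/-- A coset of a linear subspace `D` of codimension `k`, given as an element of the quotient by `D`
and regarded as a `k`-flat. -/
def ofCoset (c : F2n n ⧸ D) : Flat n k :=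
  ⟨D.mkQ ⁻¹' {c}, by
    obtain ⟨v, rfl⟩ := D.mkQ_surjective c
    exact ⟨.mk' v D, coe_mk'_eq_preimage_mkQ D v, ⟨v, rfl⟩, by
      rwa [AffineSubspace.direction_mk']⟩⟩

lemma direction_ofCoset (c : F2n n ⧸ D) : (ofCoset D hD c).direction = D := by
  obtain ⟨v, rfl⟩ := D.mkQ_surjective c
  exact (congrArg _ (coe_mk'_eq_preimage_mkQ D v).symm).trans (AffineSubspace.direction_mk' v D)

end Coset

lemma exists_ofCoset_eq (W : Flat n k) :
    ∃ c, ofCoset W.direction W.finrank_direction c = W := by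
  obtain ⟨_, A, rfl, ⟨w, hw⟩, hA⟩ := W
  refine ⟨Submodule.mkQ _ w, Subtype.ext <| Set.ext fun x => ?_⟩
  exact (Submodule.Quotient.eq _).trans (AffineSubspace.vsub_right_mem_direction_iff_mem hw x)

lemma card_filter_direction_eq_le (D : Submodule (ZMod 2) (F2n n)) :
    Finset.card {W : Flat n k | W.direction = D} ≤ 2 ^ k := by
  by_cases hD : Module.finrank (ZMod 2) D = n - k
  · have hsub : ({W : Flat n k | W.direction = D} : Finset (Flat n k)) ⊆
        Finset.univ.image (ofCoset D hD) := by
      intro W hW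
      obtain rfl := (Finset.mem_filter.1 hW).2
      simpa using W.exists_ofCoset_eq
    calc Finset.card {W : Flat n k | W.direction = D}
        ≤ Fintype.card (F2n n ⧸ D) := (Finset.card_le_card hsub).trans Finset.card_image_le
      _ = 2 ^ (n - (n - k)) := by
        rw [Module.card_eq_pow_finrank (K := ZMod 2), ZMod.card, Submodule.finrank_quotient,
          Module.finrank_fin_fun, hD]
      _ ≤ 2 ^ k := Nat.pow_le_pow_right two_pos (by omega)
  · rw [Finset.filter_false_of_mem]
    · simp
    · rintro W - rfl
      exact hD W.finrank_direction

end Flat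

section Uniform

variable {n k : ℕ}

lemma q0_nonneg (W : Flat n k) : 0 ≤ q0 n k W :=
  inv_nonneg.2 (Nat.cast_nonneg _)

lemma prob_q0 (A : Set (Flat n k)) :
    prob (q0 n k) A = Finset.card {W | W ∈ A} / Fintype.card (Flat n k) := by
  simp only [prob, q0]
  rw [← Finset.sum_filter, Finset.sum_const, nsmul_eq_mul, div_eq_mul_inv]

end Uniform

section Functional

variable {n k : ℕ} {R M : Type*} [Semiring R] [AddCommMonoid M] [Module R M]
  {U : Submodule R (F2n n → R)} (hind : ∀ W : Flat n k, Set.indicator W.1 1 ∈ U)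

lemma exists_direction_eq_map_indicator_ne_zero {h1 : 1 ∈ U} {φ : U →ₗ[R] M} (hφ : φ ⟨1, h1⟩ ≠ 0)
    (W : Flat n k) :
    ∃ W' : Flat n k, W.direction = W'.direction ∧ φ ⟨Set.indicator W'.1 1, hind W'⟩ ≠ 0 := by
  let coset := Flat.ofCoset W.direction W.finrank_direction
  have hsum : (⟨1, h1⟩ : U) = ∑ c, ⟨Set.indicator (coset c).1 1, hind (coset c)⟩ := by
    apply Subtype.ext
    rw [AddSubmonoidClass.coe_finsetSum]
    exact (sum_indicator_preimage_singleton W.direction.mkQ).symm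
  rw [hsum, map_sum] at hφ
  obtain ⟨c, -, hc⟩ := Finset.exists_ne_zero_of_sum_ne_zero hφ
  exact ⟨coset c, (Flat.direction_ofCoset _ _ c).symm, hc⟩

lemma card_flat_le_card_map_indicator_ne_zero_mul {h1 : 1 ∈ U} {φ : U →ₗ[R] M}
    (hφ : φ ⟨1, h1⟩ ≠ 0) :
    Fintype.card (Flat n k) ≤
      Finset.card {W : Flat n k | φ ⟨Set.indicator W.1 1, hind W⟩ ≠ 0} * 2 ^ k := by
  rw [← Finset.card_univ, ← mul_one (Finset.card _)]
  refine Finset.card_mul_le_card_mul (fun W W' : Flat n k => W.direction = W'.direction)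
    (fun W _ => ?_) fun W' _ => Flat.card_filter_direction_eq_le W'.direction
  obtain ⟨W', hdir, hne⟩ := exists_direction_eq_map_indicator_ne_zero hind hφ W
  exact Finset.card_pos.2 ⟨W', by simp [Finset.mem_bipartiteAbove, hdir, hne]⟩

lemma prob_q0_map_indicator_eq_zero_le {h1 : 1 ∈ U} {φ : U →ₗ[R] M} (hφ : φ ⟨1, h1⟩ ≠ 0) :
    prob (q0 n k) {W | φ ⟨Set.indicator W.1 1, hind W⟩ = 0} ≤ 1 - ((2 : ℝ) ^ k)⁻¹ := by
  have hle : ((2 : ℝ) ^ k)⁻¹ ≤ 1 := inv_le_one_of_one_le₀ (one_le_pow₀ one_le_two)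
  have hcard : (Fintype.card (Flat n k) : ℝ) * ((2 : ℝ) ^ k)⁻¹ ≤
      Finset.card {W : Flat n k | φ ⟨Set.indicator W.1 1, hind W⟩ ≠ 0} := by
    rw [← div_eq_mul_inv, div_le_iff₀ (by positivity)]
    exact_mod_cast card_flat_le_card_map_indicator_ne_zero_mul hind hφ
  have hsplit : (Finset.card {W : Flat n k | φ ⟨Set.indicator W.1 1, hind W⟩ = 0} : ℝ) +
      Finset.card {W : Flat n k | φ ⟨Set.indicator W.1 1, hind W⟩ ≠ 0} =
        Fintype.card (Flat n k) := by
    rw [← Finset.card_univ]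
    exact_mod_cast Finset.card_filter_add_card_filter_not _
  rw [prob_q0]
  refine div_le_of_le_mul₀ (Nat.cast_nonneg _) (sub_nonneg.2 hle) ?_
  simp only [Set.mem_ofPred_eq]
  linarith

end Functional

lemma card_filter_card_le_le_add_one_pow (α : Type*) [Fintype α] (k : ℕ) :
    Finset.card {S : Finset α | S.card ≤ k} ≤ (Fintype.card α + 1) ^ k := by
  calc Finset.card {S : Finset α | S.card ≤ k}
      = ∑ i ∈ Finset.range (k + 1), (Fintype.card α).choose i := by
        rw [Finset.card_eq_sum_card_fiberwise (f := Finset.card) (t := Finset.range (k + 1))]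
        · refine Finset.sum_congr rfl fun i hi => ?_
          rw [← Finset.card_univ, ← Finset.card_powersetCard]
          congr 1
          ext S
          grind
        · intro S hS
          simpa [Nat.lt_succ_iff] using hS
    _ ≤ ∑ i ∈ Finset.range (k + 1), Fintype.card α ^ i * k.choose i :=
        Finset.sum_le_sum fun i hi => (Nat.choose_le_pow _ i).trans <|
          Nat.le_mul_of_pos_right _ <| Nat.choose_pos <| Finset.mem_range_succ_iff.1 hi
    _ = (Fintype.card α + 1) ^ k := by simp [add_pow]

lemma finrank_monomialSpan_le (n k : ℕ) :
    Module.finrank (ZMod 2) (monomialSpan n k) ≤ (n + 1) ^ k := by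
  have hspan : monomialSpan n k = Submodule.span (ZMod 2)
      (Set.range fun (S : {S : Finset (Fin n) // S.card ≤ k}) (x : F2n n) => ∏ s ∈ S.1, x s) := by
    rw [monomialSpan]
    congr 1
    ext f
    simp [eq_comm]
  rw [hspan]
  refine (finrank_range_le_card _).trans ?_
  simpa [Fintype.card_subtype] using card_filter_card_le_le_add_one_pow (Fin n) k

lemma card_dual_monomialSpan_le (n k : ℕ) [Fintype (Module.Dual (ZMod 2) (monomialSpan n k))] :
    Fintype.card (Module.Dual (ZMod 2) (monomialSpan n k)) ≤ 2 ^ (n + 1) ^ k := by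
  rw [Module.card_eq_pow_finrank (K := ZMod 2), ZMod.card, Subspace.dual_finrank_eq]
  exact Nat.pow_le_pow_right two_pos (finrank_monomialSpan_le n k)

section Test

variable {n k : ℕ} (hconst : (fun _ => (1 : ZMod 2)) ∈ monomialSpan n k)
  (hind : ∀ W : Flat n k, Set.indicator W.1 1 ∈ monomialSpan n k) {m : ℕ}

lemma psiL_of_forall_notMem {V : Fin m → Flat n k} {x : F2n n} (hx : ∀ j, x ∉ (V j).1) :
    psiL n k m hconst hind V :=
  ⟨LinearMap.proj x ∘ₗ (monomialSpan n k).subtype, rfl, fun j => Set.indicator_of_notMem (hx j) 1⟩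

lemma prob_Pplanted_not_psiL : prob (Pplanted n k m) {V | ¬ psiL n k m hconst hind V} = 0 := by
  refine prob_eq_zero fun V hV => mul_eq_zero_of_right _ <| Finset.sum_eq_zero fun x _ => ?_
  obtain ⟨j, hj⟩ : ∃ j, x ∈ (V j).1 := by
    by_contra! hx
    exact hV (psiL_of_forall_notMem hconst hind hx)
  exact Finset.prod_eq_zero (Finset.mem_univ j) (if_pos hj)

lemma prob_Punif_nonneg {E : Set (Fin m → Flat n k)} : 0 ≤ prob (Punif n k m) E :=
  prob_nonneg fun V => Finset.prod_nonneg fun j _ => q0_nonneg (V j)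

lemma prob_Punif_psiL_le :
    prob (Punif n k m) {V | psiL n k m hconst hind V} ≤
      2 ^ (n + 1) ^ k * (1 - ((2 : ℝ) ^ k)⁻¹) ^ m := by
  have := Module.finite_of_finite (ZMod 2) (M := Module.Dual (ZMod 2) (monomialSpan n k))
  have := Fintype.ofFinite (Module.Dual (ZMod 2) (monomialSpan n k))
  let s : Finset (Module.Dual (ZMod 2) (monomialSpan n k)) := {φ | φ ⟨fun _ => 1, hconst⟩ = 1}
  let A (φ : Module.Dual (ZMod 2) (monomialSpan n k)) : Set (Flat n k) :=
    {W | φ ⟨Set.indicator W.1 1, hind W⟩ = 0}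
  have hpsiL : {V | psiL n k m hconst hind V} = {V | ∃ φ ∈ s, ∀ j, V j ∈ A φ} := by
    simp only [s, Finset.mem_filter_univ]
    rfl
  calc prob (Punif n k m) {V | psiL n k m hconst hind V}
      ≤ ∑ φ ∈ s, prob (q0 n k) (A φ) ^ m := by
        rw [hpsiL]
        refine (prob_prod_exists_forall_mem_le q0_nonneg s A).trans_eq ?_
        rw [Fintype.card_fin]
    _ ≤ s.card • (1 - ((2 : ℝ) ^ k)⁻¹) ^ m := by
        refine Finset.sum_le_card_nsmul _ _ _ fun φ hφ => ?_
        have hφ1 : φ ⟨fun _ => 1, hconst⟩ ≠ 0 := by simp [(Finset.mem_filter_univ φ).1 hφ]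
        exact pow_le_pow_left₀ (prob_nonneg q0_nonneg)
          (prob_q0_map_indicator_eq_zero_le hind hφ1) m
    _ ≤ 2 ^ (n + 1) ^ k * (1 - ((2 : ℝ) ^ k)⁻¹) ^ m := by
        have hle : ((2 : ℝ) ^ k)⁻¹ ≤ 1 := inv_le_one_of_one_le₀ (one_le_pow₀ one_le_two)
        rw [nsmul_eq_mul]
        refine mul_le_mul_of_nonneg_right ?_ (pow_nonneg (sub_nonneg.2 hle) m)
        exact_mod_cast s.card_le_univ.trans (card_dual_monomialSpan_le n k)

end Test

lemma tendsto_succ_pow_mul_add_pow_mul_atBot {k : ℕ} (hk : k ≠ 0) {a b : ℝ} (hab : a + b < 0) :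
    Tendsto (fun n : ℕ => ((n : ℝ) + 1) ^ k * a + (n : ℝ) ^ k * b) atTop atBot := by
  have hlim : Tendsto (fun n : ℕ => (1 + 1 / (n : ℝ)) ^ k * a + b) atTop (𝓝 (a + b)) := by
    simpa using (((tendsto_one_div_atTop_nhds_zero_nat (𝕜 := ℝ)).const_add 1).pow k).mul_const a
      |>.add_const b
  have hpow : Tendsto (fun n : ℕ => (n : ℝ) ^ k) atTop atTop :=
    (tendsto_pow_atTop hk).comp tendsto_natCast_atTop_atTop
  refine (hpow.atTop_mul_neg hab hlim).congr' ?_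
  filter_upwards [eventually_ne_atTop 0] with n hn
  rw [mul_add, ← mul_assoc, ← mul_pow, mul_one_add, mul_one_div_cancel (Nat.cast_ne_zero.2 hn)]

lemma tendsto_pow_succ_pow_mul_pow_ceil {k : ℕ} (hk : k ≠ 0) {b r c : ℝ} (hb : 0 < b) (hr : 0 < r)
    (hr1 : r ≤ 1) (hbr : Real.log b + c * Real.log r < 0) :
    Tendsto (fun n : ℕ => b ^ (n + 1) ^ k * r ^ ⌈c * (n : ℝ) ^ k⌉₊) atTop (𝓝 0) := by
  refine squeeze_zero (fun n => by positivity) (fun n => ?_)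
    (Real.tendsto_exp_atBot.comp (tendsto_succ_pow_mul_add_pow_mul_atBot hk hbr))
  calc b ^ (n + 1) ^ k * r ^ ⌈c * (n : ℝ) ^ k⌉₊
      ≤ b ^ (((n : ℝ) + 1) ^ k) * r ^ (c * (n : ℝ) ^ k) := by
        rw [← Real.rpow_natCast b, ← Real.rpow_natCast r]
        push_cast
        gcongr ?_ * ?_
        exact Real.rpow_le_rpow_of_exponent_ge hr hr1 (Nat.le_ceil _)
    _ = Real.exp (((n : ℝ) + 1) ^ k * Real.log b + (n : ℝ) ^ k * (c * Real.log r)) := by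
        rw [Real.rpow_def_of_pos hb, Real.rpow_def_of_pos hr, ← Real.exp_add]
        ring_nf

lemma log_two_add_mul_log_neg {k : ℕ} (hk : k ≠ 0) {Δ : ℝ} (hΔ : DeltaK k < Δ) :
    Real.log 2 + Δ * Real.log (1 - ((2 : ℝ) ^ k)⁻¹) < 0 := by
  have hlog : Real.log (1 - ((2 : ℝ) ^ k)⁻¹) < 0 :=
    Real.log_neg (sub_pos.2 (inv_lt_one_of_one_lt₀ (one_lt_pow₀ one_lt_two hk)))
      (sub_lt_self _ (by positivity))
  rw [DeltaK, div_lt_iff_of_neg hlog, one_div, Real.log_inv] at hΔ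
  linarith

theorem stmt14 (k : ℕ) (hk : 1 ≤ k) (Δ : ℝ) (hΔk : DeltaK k < Δ)
    (hconst : ∀ n : ℕ, (fun _ => (1 : ZMod 2)) ∈ monomialSpan n k)
    (hind : ∀ (n : ℕ) (W : Flat n k), Set.indicator W.1 1 ∈ monomialSpan n k) :
    Tendsto (fun n : ℕ =>
        max (prob (Punif n k ⌈Δ * (n:ℝ)^k⌉₊)
              {V | psiL n k ⌈Δ * (n:ℝ)^k⌉₊ (hconst n) (hind n) V})
            (prob (Pplanted n k ⌈Δ * (n:ℝ)^k⌉₊)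
              {V | ¬ psiL n k ⌈Δ * (n:ℝ)^k⌉₊ (hconst n) (hind n) V}))
      atTop (nhds 0)
    ∧ ∀ n : ℕ, k ≤ n →
        prob (Pplanted n k ⌈Δ * (n:ℝ)^k⌉₊)
          {V | ¬ psiL n k ⌈Δ * (n:ℝ)^k⌉₊ (hconst n) (hind n) V} = 0 := by
  refine ⟨?_, fun n _ => prob_Pplanted_not_psiL (hconst n) (hind n)⟩
  have hk0 : k ≠ 0 := Nat.one_le_iff_ne_zero.1 hk
  have hinv : ((2 : ℝ) ^ k)⁻¹ < 1 := inv_lt_one_of_one_lt₀ (one_lt_pow₀ one_lt_two hk0)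
  have hbound := tendsto_pow_succ_pow_mul_pow_ceil hk0 two_pos (sub_pos.2 hinv)
    (sub_le_self 1 (by positivity)) (log_two_add_mul_log_neg hk0 hΔk)
  refine squeeze_zero (fun n => le_max_of_le_left prob_Punif_nonneg) (fun n => ?_) hbound
  rw [prob_Pplanted_not_psiL, max_eq_left prob_Punif_nonneg]
  exact prob_Punif_psiL_le (hconst n) (hind n)
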